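/- arXiv:1907.07089 — 10 statements merged into one kernel-verified Lean document; each statement's English description precedes it below -/
import Mathlib

section
/- Let A = (a_ij) and B = (b_ij) be real n×n matrices such that a_ii < 0 for all i; b_ii < 0 for all i and b_ij = 0 for all i ≠ j (so B is a negative diagonal matrix); and A is negative diagonally dominant, i.e., there exist positive reals m_1, …, m_n with m_i·|a_ii| > Σ_{j≠i} m_j·|a_ij| for every i. Then the 2n×2n block matrix C = [[A, B], [I_n, 0]] is multiplicative D-stable: for every 2n×2n positive diagonal matrix D, the matrix D·C is Hurwitz stable. -/
open Matrix

/-- The spectrum of a real square matrix, viewed as a subset of `ℂ`: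
the set of complex roots of its characteristic polynomial. -/
def spec {m : Type*} [Fintype m] [DecidableEq m] (M : Matrix m m ℝ) : Set ℂ :=
  spectrum ℂ (M.map (Complex.ofReal ·))

/-- A real square matrix is Hurwitz stable if every eigenvalue has negative real part. -/
def HurwitzStable {m : Type*} [Fintype m] [DecidableEq m] (M : Matrix m m ℝ) : Prop :=
  ∀ z ∈ spec M, z.re < 0

theorem stmt0 {n : ℕ} (A B : Matrix (Fin n) (Fin n) ℝ)
    (hAneg : ∀ i, A i i < 0)
    (hBneg : ∀ i, B i i < 0)
    (hBdiag : ∀ i j, i ≠ j → B i j = 0)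
    (hNDD : ∃ m : Fin n → ℝ, (∀ i, 0 < m i) ∧
      ∀ i, (∑ j ∈ Finset.univ.erase i, m j * |A i j|) < m i * |A i i|) :
    ∀ d : (Fin n ⊕ Fin n) → ℝ, (∀ k, 0 < d k) →
      HurwitzStable ((Matrix.diagonal d) * (Matrix.fromBlocks A B 1 0)) := by
  obtain ⟨m, hm, hdom⟩ := hNDD
  intro d hd z hz
  by_contra hre
  push Not at hre
  unfold spec at hz
  rw [spectrum.mem_iff, Matrix.isUnit_iff_isUnit_det, isUnit_iff_ne_zero, not_not,
    ← Matrix.exists_mulVec_eq_zero_iff] at hz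
  obtain ⟨v, hv0, hv⟩ := hz
  rw [Matrix.sub_mulVec, sub_eq_zero, Algebra.algebraMap_eq_smul_one, Matrix.smul_mulVec,
    Matrix.one_mulVec] at hv
  have h1 : ∀ i, z * v (Sum.inl i) = d (Sum.inl i) * (∑ j, (A i j : ℂ) * v (Sum.inl j))
      + d (Sum.inl i) * (B i i * v (Sum.inr i)) := by
    intro i
    have h := congrFun hv (Sum.inl i)
    simp only [Pi.smul_apply, smul_eq_mul, Matrix.mulVec, dotProduct, Matrix.map_apply,
      Matrix.diagonal_mul, Fintype.sum_sum_type, Matrix.fromBlocks_apply₁₁,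
      Matrix.fromBlocks_apply₁₂, Complex.ofReal_mul, mul_assoc] at h
    rw [h, ← Finset.mul_sum, ← Finset.mul_sum]
    congr 2
    apply Finset.sum_eq_single i
    · intro j _ hj
      rw [hBdiag i j hj.symm]; simp
    · simp
  have h2 : ∀ i, z * v (Sum.inr i) = d (Sum.inr i) * v (Sum.inl i) := by
    intro i
    have h := congrFun hv (Sum.inr i)
    simp only [Pi.smul_apply, smul_eq_mul, Matrix.mulVec, dotProduct, Matrix.map_apply,
      Matrix.diagonal_mul, Fintype.sum_sum_type, Matrix.fromBlocks_apply₂₁,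
      Matrix.fromBlocks_apply₂₂, Complex.ofReal_mul, mul_assoc] at h
    rw [h, ← Finset.mul_sum, ← Finset.mul_sum]
    simp only [Matrix.one_apply, Matrix.zero_apply, apply_ite Complex.ofReal, Complex.ofReal_one,
      Complex.ofReal_zero, ite_mul, one_mul, zero_mul, Finset.sum_ite_eq, Finset.mem_univ,
      if_true, Finset.sum_const_zero, mul_zero, add_zero]
  have hdc : ∀ k, (d k : ℂ) ≠ 0 := fun k => by exact_mod_cast (hd k).ne'
  have hBc : ∀ i, (B i i : ℂ) ≠ 0 := fun k => by exact_mod_cast (hBneg k).ne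
  -- x ≠ 0
  have hx : ∃ i, v (Sum.inl i) ≠ 0 := by
    by_contra hcon
    push Not at hcon
    apply hv0
    funext k
    rcases k with i | i
    · exact hcon i
    · have h := h1 i
      simp only [hcon, mul_zero, Finset.sum_const_zero, zero_add] at h
      have h' := h.symm
      simpa [hdc, hBc] using h'
  have hz0 : z ≠ 0 := by
    rintro rfl
    obtain ⟨i, hi⟩ := hx
    have h := h2 i
    rw [zero_mul] at h
    exact (mul_ne_zero (hdc _) hi) h.symm
  obtain ⟨i0, hi0⟩ := hx
  obtain ⟨i, -, hmax⟩ := Finset.exists_max_image Finset.univ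
    (fun i => ‖v (Sum.inl i)‖ / m i) ⟨i0, Finset.mem_univ _⟩
  have hipos : 0 < ‖v (Sum.inl i)‖ / m i :=
    lt_of_lt_of_le (div_pos (norm_pos_iff.mpr hi0) (hm i0)) (hmax i0 (Finset.mem_univ _))
  set t := ‖v (Sum.inl i)‖ / m i with ht
  have hvi : ‖v (Sum.inl i)‖ = t * m i := by
    rw [ht]; field_simp [(hm i).ne']
  have hvj : ∀ j, ‖v (Sum.inl j)‖ ≤ t * m j := fun j =>
    (div_le_iff₀ (hm j)).mp (hmax j (Finset.mem_univ _))
  set c : ℝ := - B i i * d (Sum.inr i) with hc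
  have hcpos : 0 < c := mul_pos (neg_pos.mpr (hBneg i)) (hd _)
  have hdi := hd (Sum.inl i)
  set e := d (Sum.inl i) with he
  have key : (z / e + c * z⁻¹ - A i i) * v (Sum.inl i)
      = ∑ j ∈ Finset.univ.erase i, (A i j : ℂ) * v (Sum.inl j) := by
    have hs := Finset.add_sum_erase Finset.univ (fun j => (A i j : ℂ) * v (Sum.inl j))
      (Finset.mem_univ i)
    have a1 := h1 i
    have a2 := h2 i
    have hec : (e : ℂ) ≠ 0 := hdc _
    have a3 : v (Sum.inr i) = d (Sum.inr i) * v (Sum.inl i) * z⁻¹ := by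
      rw [← a2]; field_simp
    rw [← hs, a3] at a1
    have a4 : z / e * v (Sum.inl i) = A i i * v (Sum.inl i)
        + ∑ j ∈ Finset.univ.erase i, (A i j : ℂ) * v (Sum.inl j)
        + B i i * (d (Sum.inr i) * v (Sum.inl i) * z⁻¹) := by
      rw [div_mul_eq_mul_div, a1, ← he]
      field_simp
    have hcc : (c : ℂ) = - B i i * d (Sum.inr i) := by rw [hc]; push_cast; ring
    rw [hcc]
    linear_combination a4
  have hlow : |A i i| ≤ ‖z / e + c * z⁻¹ - A i i‖ := by
    refine le_trans ?_ (Complex.re_le_norm _)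
    have r1 : (z / (e : ℂ)).re = z.re / e := Complex.div_ofReal_re z e
    have r2 : ((c : ℂ) * z⁻¹).re = c * (z.re / Complex.normSq z) := by
      rw [Complex.re_ofReal_mul, Complex.inv_re]
    rw [Complex.sub_re, Complex.add_re, r1, r2, Complex.ofReal_re, abs_of_neg (hAneg i)]
    have := div_nonneg hre hdi.le
    have := mul_nonneg hcpos.le (div_nonneg hre (Complex.normSq_nonneg z))
    linarith
  have hup : ‖∑ j ∈ Finset.univ.erase i, (A i j : ℂ) * v (Sum.inl j)‖
      ≤ t * ∑ j ∈ Finset.univ.erase i, m j * |A i j| := by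
    rw [Finset.mul_sum]
    refine norm_sum_le_of_le _ fun j _ => ?_
    rw [norm_mul, Complex.norm_real, Real.norm_eq_abs]
    nlinarith [mul_le_mul_of_nonneg_left (hvj j) (abs_nonneg (A i j))]
  rw [← key, norm_mul, hvi] at hup
  have hfin := mul_lt_mul_of_pos_left (hdom i) hipos
  have := mul_le_mul_of_nonneg_right hlow (mul_pos hipos (hm i)).le
  nlinarith
end

section
/- Let A = (a_ij) be a real n×n matrix with a_ii < 0 for all i, and let b < 0 be a real number. Then the following are equivalent: (i) for every n×n positive diagonal matrix D, the 2n×2n block matrix [[D·A, b·I_n], [I_n, 0]] is Hurwitz stable; (ii) A is multiplicative D-stable, i.e., DA is Hurwitz stable for every n×n positive diagonal matrix D. -/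
open Matrix

theorem mem_spec_iff {m : Type*} [Fintype m] [DecidableEq m] (M : Matrix m m ℝ) (z : ℂ) :
    z ∈ spec M ↔ ∃ v : m → ℂ, v ≠ 0 ∧ (M.map (Complex.ofReal ·)) *ᵥ v = z • v := by
  unfold spec
  rw [spectrum.mem_iff, Matrix.isUnit_iff_isUnit_det, isUnit_iff_ne_zero, not_not,
    ← Matrix.exists_mulVec_eq_zero_iff]
  refine exists_congr fun v => and_congr_right fun _ => ?_
  rw [Matrix.sub_mulVec, sub_eq_zero, Algebra.algebraMap_eq_smul_one, Matrix.smul_mulVec,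
    Matrix.one_mulVec, eq_comm]

theorem block_map {n : ℕ} (M : Matrix (Fin n) (Fin n) ℝ) (b : ℝ) (u v : Fin n → ℂ) :
    ((Matrix.fromBlocks M (b • (1 : Matrix (Fin n) (Fin n) ℝ)) 1 0).map (Complex.ofReal ·)) *ᵥ
      (Sum.elim u v) = Sum.elim ((M.map (Complex.ofReal ·)) *ᵥ u + (b : ℂ) • v) u := by
  have h1 : (b • (1 : Matrix (Fin n) (Fin n) ℝ)).map (Complex.ofReal ·)
      = (b : ℂ) • (1 : Matrix (Fin n) (Fin n) ℂ) := by
    ext i j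
    by_cases h : i = j <;> simp [Matrix.one_apply, h]
  have h2 : (1 : Matrix (Fin n) (Fin n) ℝ).map (Complex.ofReal ·) = 1 := by
    ext i j
    by_cases h : i = j <;> simp [Matrix.one_apply, h]
  have h3 : (0 : Matrix (Fin n) (Fin n) ℝ).map (Complex.ofReal ·) = 0 := by
    ext i j
    simp
  rw [Matrix.fromBlocks_map, h1, h2, h3, Matrix.fromBlocks_mulVec]
  simp [Matrix.smul_mulVec]

theorem block_spec {n : ℕ} (M : Matrix (Fin n) (Fin n) ℝ) (b : ℝ) (hb : b < 0) (z : ℂ) :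
    z ∈ spec (Matrix.fromBlocks M (b • (1 : Matrix (Fin n) (Fin n) ℝ)) 1 0) ↔
      z ≠ 0 ∧ z - b / z ∈ spec M := by
  have hbc : (b : ℂ) ≠ 0 := by exact_mod_cast hb.ne
  rw [mem_spec_iff, mem_spec_iff]
  constructor
  · rintro ⟨w, hw, h⟩
    obtain ⟨u, v, rfl⟩ : ∃ u v, w = Sum.elim u v :=
      ⟨w ∘ Sum.inl, w ∘ Sum.inr, (Sum.elim_comp_inl_inr w).symm⟩
    rw [block_map] at h
    have hu : u = z • v := by
      ext i
      simpa using congrFun h (Sum.inr i)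
    have hM : (M.map (Complex.ofReal ·)) *ᵥ u + (b : ℂ) • v = z • u := by
      ext i
      simpa using congrFun h (Sum.inl i)
    have hv : v ≠ 0 := by
      rintro rfl
      apply hw
      rw [hu]
      ext i
      cases i <;> simp
    have hz : z ≠ 0 := by
      rintro rfl
      rw [zero_smul] at hu
      subst hu
      simp [hb.ne, hv] at hM
    refine ⟨hz, v, hv, ?_⟩
    rw [hu, Matrix.mulVec_smul] at hM
    ext i
    have := congrFun hM i
    simp only [Pi.add_apply, Pi.smul_apply, smul_eq_mul] at this ⊢
    field_simp
    linear_combination this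
  · rintro ⟨hz, v, hv, h⟩
    refine ⟨Sum.elim (z • v) v, ?_, ?_⟩
    · intro h0
      apply hv
      ext i
      simpa using congrFun h0 (Sum.inr i)
    · rw [block_map, Matrix.mulVec_smul, h]
      ext i
      cases i
      · simp only [Sum.elim_inl, Pi.add_apply, Pi.smul_apply, smul_eq_mul]
        field_simp
        ring
      · simp

theorem re_sign (b : ℝ) (hb : b < 0) (z : ℂ) (hz : z ≠ 0) :
    (z - b / z).re < 0 ↔ z.re < 0 := by
  have hn : 0 < Complex.normSq z := Complex.normSq_pos.2 hz
  have e : (z - b / z).re = z.re * (1 + (-b) / Complex.normSq z) := by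
    simp [Complex.div_re]
    ring
  have hp : 0 < 1 + (-b) / Complex.normSq z := by
    have : 0 < (-b) / Complex.normSq z := div_pos (by linarith) hn
    linarith
  rw [e]
  constructor
  · intro h
    by_contra h'
    nlinarith [mul_nonneg (not_lt.1 h') hp.le]
  · intro h
    exact mul_neg_of_neg_of_pos h hp

theorem block_stable {n : ℕ} (M : Matrix (Fin n) (Fin n) ℝ) (b : ℝ) (hb : b < 0) :
    HurwitzStable (Matrix.fromBlocks M (b • (1 : Matrix (Fin n) (Fin n) ℝ)) 1 0) ↔
      HurwitzStable M := by
  have hbc : (b : ℂ) ≠ 0 := by exact_mod_cast hb.ne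
  constructor
  · intro h μ hμ
    obtain ⟨s, hs⟩ := IsAlgClosed.exists_pow_nat_eq (μ ^ 2 + 4 * b) (n := 2) (by norm_num)
    have hq : ((μ + s) / 2) ^ 2 - μ * ((μ + s) / 2) - b = 0 := by
      linear_combination hs / 4
    generalize (μ + s) / 2 = z at hq
    have hz : z ≠ 0 := by
      rintro rfl
      apply hbc
      linear_combination -hq
    have e : z - b / z = μ := by
      field_simp
      linear_combination hq
    rw [← e, re_sign b hb z hz]
    exact h z ((block_spec M b hb z).2 ⟨hz, by rwa [e]⟩)
  · intro h z hz
    obtain ⟨h0, h1⟩ := (block_spec M b hb z).1 hz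
    exact (re_sign b hb z h0).1 (h _ h1)

theorem stmt1 {n : ℕ} (A : Matrix (Fin n) (Fin n) ℝ) (b : ℝ)
    (hAneg : ∀ i, A i i < 0) (hb : b < 0) :
    (∀ d : Fin n → ℝ, (∀ i, 0 < d i) →
        HurwitzStable (Matrix.fromBlocks ((Matrix.diagonal d) * A)
          (b • (1 : Matrix (Fin n) (Fin n) ℝ)) 1 0))
    ↔ (∀ d : Fin n → ℝ, (∀ i, 0 < d i) → HurwitzStable ((Matrix.diagonal d) * A)) := by
  exact forall_congr' fun d => forall_congr' fun _ => block_stable _ b hb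
end

section
/- Let A be a real n×n matrix and suppose A is diagonally hyperbolic: there exists an invertible real diagonal matrix D₀ such that D₀A + AᵀD₀ is positive definite. Then A is multiplicative D-hyperbolic: for every invertible real diagonal matrix D, every λ ∈ σ(DA) has Re λ ≠ 0. -/
open Matrix

/-- A real matrix `W` is positive definite (as a quadratic form):
`xᵀ W x > 0` for every nonzero real vector `x`. -/
def PosDefQ {n : ℕ} (W : Matrix (Fin n) (Fin n) ℝ) : Prop :=
  ∀ x : Fin n → ℝ, x ≠ 0 → 0 < x ⬝ᵥ (W *ᵥ x)

theorem quad_aux {n : ℕ} (A : Matrix (Fin n) (Fin n) ℝ) (d₀ x : Fin n → ℝ) :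
    x ⬝ᵥ ((Matrix.diagonal d₀ * A + Aᵀ * Matrix.diagonal d₀) *ᵥ x)
      = 2 * ∑ i, d₀ i * x i * (A *ᵥ x) i := by
  have h1 : x ⬝ᵥ ((Matrix.diagonal d₀ * A) *ᵥ x) = ∑ i, d₀ i * x i * (A *ᵥ x) i := by
    rw [← Matrix.mulVec_mulVec]
    simp only [dotProduct, Matrix.mulVec_diagonal]
    exact Finset.sum_congr rfl fun i _ => by ring
  have h2 : x ⬝ᵥ ((Aᵀ * Matrix.diagonal d₀) *ᵥ x) = ∑ i, d₀ i * x i * (A *ᵥ x) i := by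
    rw [← Matrix.mulVec_mulVec, Matrix.dotProduct_mulVec, Matrix.vecMul_transpose]
    simp only [dotProduct, Matrix.mulVec_diagonal]
    exact Finset.sum_congr rfl fun i _ => by ring
  rw [Matrix.add_mulVec, dotProduct_add, h1, h2]; ring

theorem stmt7 {n : ℕ} (A : Matrix (Fin n) (Fin n) ℝ)
    (hdh : ∃ d₀ : Fin n → ℝ, (∀ i, d₀ i ≠ 0) ∧
      PosDefQ ((Matrix.diagonal d₀) * A + Aᵀ * (Matrix.diagonal d₀))) :
    ∀ d : Fin n → ℝ, (∀ i, d i ≠ 0) →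
      ∀ z ∈ spec ((Matrix.diagonal d) * A), z.re ≠ 0 := by
  obtain ⟨d₀, -, hW⟩ := hdh
  intro d hd z hz hre
  unfold spec at hz
  rw [← Matrix.spectrum_toLin', ← Module.End.hasEigenvalue_iff_mem_spectrum] at hz
  obtain ⟨v, hv⟩ := hz.exists_hasEigenvector
  have hv0 : v ≠ 0 := hv.2
  have hev := hv.apply_eq_smul
  have hi : ∀ i, (d i : ℂ) * ∑ j, (A i j : ℂ) * v j = z * v i := by
    intro i
    have := congrFun hev i
    simp only [Matrix.toLin'_apply, Matrix.mulVec, dotProduct, Matrix.map_apply,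
      Matrix.diagonal_mul, Complex.ofReal_mul, Pi.smul_apply, smul_eq_mul] at this
    rw [← this, Finset.mul_sum]
    exact Finset.sum_congr rfl fun j _ => by ring
  have hx : ∀ i, d i * (A *ᵥ fun j => (v j).re) i = - (z.im * (v i).im) := by
    intro i
    have := congrArg Complex.re (hi i)
    simpa [Matrix.mulVec, dotProduct, hre] using this
  have hy : ∀ i, d i * (A *ᵥ fun j => (v j).im) i = z.im * (v i).re := by
    intro i
    have := congrArg Complex.im (hi i)
    simpa [Matrix.mulVec, dotProduct, hre] using this
  have hsum : (∑ i, d₀ i * (v i).re * (A *ᵥ fun j => (v j).re) i)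
      + ∑ i, d₀ i * (v i).im * (A *ᵥ fun j => (v j).im) i = 0 := by
    rw [← Finset.sum_add_distrib]
    refine Finset.sum_eq_zero fun i _ => ?_
    apply mul_left_cancel₀ (hd i)
    linear_combination d₀ i * (v i).re * hx i + d₀ i * (v i).im * hy i
  have hX := hW (fun j => (v j).re)
  have hY := hW (fun j => (v j).im)
  rw [quad_aux] at hX hY
  by_cases hx0 : (fun j => (v j).re) = 0
  · by_cases hy0 : (fun j => (v j).im) = 0
    · exact hv0 (funext fun j => Complex.ext (congrFun hx0 j) (congrFun hy0 j))
    · have h := hY hy0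
      have h0 : ∀ j, (v j).re = 0 := fun j => congrFun hx0 j
      have : (∑ i, d₀ i * (v i).re * (A *ᵥ fun j => (v j).re) i) = 0 :=
        Finset.sum_eq_zero fun i _ => by rw [h0 i]; ring
      linarith
  · have h := hX hx0
    by_cases hy0 : (fun j => (v j).im) = 0
    · have h0 : ∀ j, (v j).im = 0 := fun j => congrFun hy0 j
      have : (∑ i, d₀ i * (v i).im * (A *ᵥ fun j => (v j).im) i) = 0 :=
        Finset.sum_eq_zero fun i _ => by rw [h0 i]; ring
      linarith
    · have h' := hY hy0
      linarith
end

section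
/- Every multiplicative D-stable real n×n matrix A is invertible, and A is multiplicative D-stable if and only if A⁻¹ is multiplicative D-stable. -/
open Matrix

/-- A real square matrix `A` is multiplicative D-stable if `D * A` is Hurwitz stable
for every positive diagonal matrix `D`. -/
def MultDStable {n : ℕ} (A : Matrix (Fin n) (Fin n) ℝ) : Prop :=
  ∀ d : Fin n → ℝ, (∀ i, 0 < d i) → HurwitzStable ((Matrix.diagonal d) * A)

theorem aux_isUnit {n : ℕ} (A : Matrix (Fin n) (Fin n) ℝ) (h : MultDStable A) : IsUnit A := by
  by_contra hA
  have h1 := h (fun _ => 1) (fun _ => one_pos) 0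
  have : (0 : ℂ) ∈ spec (Matrix.diagonal (fun _ : Fin n => (1 : ℝ)) * A) := by
    unfold spec
    rw [spectrum.zero_mem_iff, Matrix.diagonal_one, one_mul]
    intro hu
    apply hA
    rw [Matrix.isUnit_iff_isUnit_det, isUnit_iff_ne_zero] at hu ⊢
    intro h0
    apply hu
    have := (Complex.ofRealHom.map_det A)
    rw [h0, map_zero] at this
    exact this.symm
  simpa using h1 this

theorem aux_inv {n : ℕ} (A : Matrix (Fin n) (Fin n) ℝ) (h : MultDStable A) : MultDStable A⁻¹ := by
  have hA := aux_isUnit A h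
  have hdet : IsUnit A.det := (Matrix.isUnit_iff_isUnit_det A).1 hA
  intro d hd z hz
  have hDD : Matrix.diagonal d * Matrix.diagonal (fun i => (d i)⁻¹) = 1 := by
    rw [Matrix.diagonal_mul_diagonal, ← Matrix.diagonal_one]
    congr 1; funext i; exact mul_inv_cancel₀ (hd i).ne'
  have e1 : (Matrix.diagonal d * A⁻¹) * (A * Matrix.diagonal (fun i => (d i)⁻¹)) = 1 := by
    rw [Matrix.mul_assoc, Matrix.nonsing_inv_mul_cancel_left _ _ hdet, hDD]
  have e2 := mul_eq_one_comm.1 e1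
  let f := Complex.ofRealHom.mapMatrix (m := Fin n)
  let u : (Matrix (Fin n) (Fin n) ℂ)ˣ :=
    ⟨f (Matrix.diagonal d * A⁻¹), f (A * Matrix.diagonal (fun i => (d i)⁻¹)),
      by rw [← map_mul, e1, map_one], by rw [← map_mul, e2, map_one]⟩
  have hz' : z ∈ spectrum ℂ (u : Matrix (Fin n) (Fin n) ℂ) := hz
  have hz0 : z ≠ 0 := spectrum.ne_zero_of_mem_of_unit hz'
  have h3 : (((Units.mk0 z hz0)⁻¹ : ℂˣ) : ℂ) ∈
      spectrum ℂ ((u⁻¹ : (Matrix (Fin n) (Fin n) ℂ)ˣ) : Matrix (Fin n) (Fin n) ℂ) :=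
    spectrum.inv_mem_iff.1 hz'
  have h4 : (((Units.mk0 z hz0)⁻¹ : ℂˣ) : ℂ) ∈
      spectrum ℂ (f A * f (Matrix.diagonal (fun i => (d i)⁻¹))) := by
    rw [← map_mul]; exact h3
  rw [spectrum.unit_mem_mul_comm, ← map_mul] at h4
  have h5 := h (fun i => (d i)⁻¹) (fun i => inv_pos.2 (hd i)) _ h4
  rw [Units.val_inv_eq_inv_val, Units.val_mk0, Complex.inv_re] at h5
  by_contra hc
  exact absurd h5 (not_lt.2 (div_nonneg (not_lt.1 hc) (Complex.normSq_nonneg z)))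

theorem stmt9 {n : ℕ} (A : Matrix (Fin n) (Fin n) ℝ) :
    (MultDStable A → IsUnit A) ∧ (MultDStable A ↔ MultDStable A⁻¹) := by
  refine ⟨aux_isUnit A, aux_inv A, fun h => ?_⟩
  have hu : IsUnit A := Matrix.isUnit_nonsing_inv_iff.1 (aux_isUnit _ h)
  have := aux_inv _ h
  rwa [Matrix.nonsing_inv_nonsing_inv _ ((Matrix.isUnit_iff_isUnit_det A).1 hu)] at this
end

section
/- Let A, P, G be real n×n matrices, where P and G are symmetric positive definite and commute (PG = GP). If PA + AᵀP is positive definite, then the matrix AG is positive stable (every λ ∈ σ(AG) has Re λ > 0) and the matrix A + G is positive stable (every λ ∈ σ(A+G) has Re λ > 0). -/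
open Matrix

/-- A real square matrix is positive stable if every eigenvalue has positive real part. -/
def PosStable {m : Type*} [Fintype m] [DecidableEq m] (M : Matrix m m ℝ) : Prop :=
  ∀ z ∈ spec M, 0 < z.re

lemma aux_lyap {n : ℕ} (Q M : Matrix (Fin n) (Fin n) ℝ) (hs : Q.IsSymm) (hQ : PosDefQ Q)
    (h : ∀ x : Fin n → ℝ, x ≠ 0 → 0 < x ⬝ᵥ (Q *ᵥ (M *ᵥ x))) : PosStable M := by
  intro z hz
  unfold spec at hz
  rw [spectrum.mem_iff, Matrix.isUnit_iff_isUnit_det, isUnit_iff_ne_zero, not_not,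
    ← Matrix.exists_mulVec_eq_zero_iff] at hz
  obtain ⟨v, hv, hvz⟩ := hz
  rw [Matrix.sub_mulVec, sub_eq_zero, Algebra.algebraMap_eq_smul_one, Matrix.smul_mulVec,
    Matrix.one_mulVec] at hvz
  set x : Fin n → ℝ := fun i => (v i).re with hx
  set y : Fin n → ℝ := fun i => (v i).im with hy
  have h1 : M *ᵥ x = z.re • x - z.im • y := by
    ext i
    have := congrArg Complex.re (congrFun hvz i)
    simp [Matrix.mulVec, dotProduct] at this
    simp [Matrix.mulVec, dotProduct, hx, hy, this]
  have h2 : M *ᵥ y = z.re • y + z.im • x := by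
    ext i
    have := congrArg Complex.im (congrFun hvz i)
    simp [Matrix.mulVec, dotProduct] at this
    simp [Matrix.mulVec, dotProduct, hx, hy, this]
  have hxy : x ≠ 0 ∨ y ≠ 0 := by
    by_contra hc
    push Not at hc
    apply hv
    ext i
    exact Complex.ext (congrFun hc.1 i) (congrFun hc.2 i)
  have hsym : y ⬝ᵥ (Q *ᵥ x) = x ⬝ᵥ (Q *ᵥ y) := by
    rw [Matrix.dotProduct_mulVec, ← Matrix.mulVec_transpose, hs.eq, dotProduct_comm]
  have key : x ⬝ᵥ (Q *ᵥ (M *ᵥ x)) + y ⬝ᵥ (Q *ᵥ (M *ᵥ y))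
      = z.re * (x ⬝ᵥ (Q *ᵥ x) + y ⬝ᵥ (Q *ᵥ y)) := by
    rw [h1, h2]
    simp only [Matrix.mulVec_sub, Matrix.mulVec_add, Matrix.mulVec_smul, dotProduct_sub,
      dotProduct_add, dotProduct_smul, smul_eq_mul, hsym]
    ring
  have nn : ∀ w : Fin n → ℝ, 0 ≤ w ⬝ᵥ (Q *ᵥ (M *ᵥ w)) ∧ 0 ≤ w ⬝ᵥ (Q *ᵥ w) := by
    intro w
    by_cases hw : w = 0
    · simp [hw]
    · exact ⟨(h w hw).le, (hQ w hw).le⟩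
  have p1 : 0 < x ⬝ᵥ (Q *ᵥ (M *ᵥ x)) + y ⬝ᵥ (Q *ᵥ (M *ᵥ y)) := by
    rcases hxy with hh | hh
    · linarith [h _ hh, (nn y).1]
    · linarith [h _ hh, (nn x).1]
  have p2 : 0 ≤ x ⬝ᵥ (Q *ᵥ x) + y ⬝ᵥ (Q *ᵥ y) := add_nonneg (nn x).2 (nn y).2
  rw [key] at p1
  exact pos_of_mul_pos_left p1 p2

lemma aux_inj {n : ℕ} {G : Matrix (Fin n) (Fin n) ℝ} (hG : PosDefQ G) {x : Fin n → ℝ}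
    (hx : x ≠ 0) : G *ᵥ x ≠ 0 := by
  intro h
  have := hG x hx
  simp [h] at this

lemma aux_mul {n : ℕ} (P G : Matrix (Fin n) (Fin n) ℝ)
    (hPsymm : P.IsSymm) (hPpd : PosDefQ P)
    (hGsymm : G.IsSymm) (hGpd : PosDefQ G)
    (hPG : P * G = G * P) : (P * G).IsSymm ∧ PosDefQ (P * G) := by
  have hsy : (P * G).IsSymm := by
    rw [Matrix.IsSymm, Matrix.transpose_mul, hPsymm.eq, hGsymm.eq, hPG]
  refine ⟨hsy, ?_⟩
  have hh : (P * G).IsHermitian := by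
    rw [Matrix.IsHermitian, Matrix.conjTranspose_eq_transpose_of_trivial, hsy.eq]
  have hpd : (P * G).PosDef := by
    rw [hh.posDef_iff_eigenvalues_pos]
    intro i
    have he := hh.mulVec_eigenvectorBasis i
    set w : Fin n → ℝ := ⇑(hh.eigenvectorBasis i) with hw
    have hw0 : w ≠ 0 := by
      intro h0
      apply hh.eigenvectorBasis.orthonormal.ne_zero i
      ext j
      exact congrFun h0 j
    have h1 := hPpd _ (aux_inj hGpd hw0)
    rw [Matrix.mulVec_mulVec, he, dotProduct_smul, smul_eq_mul, dotProduct_comm] at h1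
    exact pos_of_mul_pos_left h1 (hGpd w hw0).le
  intro x hx
  simpa using hpd.dotProduct_mulVec_pos hx

theorem stmt14 {n : ℕ} (A P G : Matrix (Fin n) (Fin n) ℝ)
    (hPsymm : P.IsSymm) (hPpd : PosDefQ P)
    (hGsymm : G.IsSymm) (hGpd : PosDefQ G)
    (hPG : P * G = G * P)
    (hLyap : PosDefQ (P * A + Aᵀ * P)) :
    PosStable (A * G) ∧ PosStable (A + G) := by
  obtain ⟨hs, hpd⟩ := aux_mul P G hPsymm hPpd hGsymm hGpd hPG
  have hA : ∀ x : Fin n → ℝ, x ≠ 0 → 0 < x ⬝ᵥ (P *ᵥ (A *ᵥ x)) := by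
    intro x hx
    have h := hLyap x hx
    have e : x ⬝ᵥ ((Aᵀ * P) *ᵥ x) = x ⬝ᵥ ((P * A) *ᵥ x) := by
      have : Aᵀ * P = (P * A)ᵀ := by rw [Matrix.transpose_mul, hPsymm.eq]
      rw [this, Matrix.mulVec_transpose, dotProduct_comm, ← Matrix.dotProduct_mulVec]
    rw [Matrix.add_mulVec, dotProduct_add, e, ← Matrix.mulVec_mulVec] at h
    linarith
  constructor
  · apply aux_lyap (P * G) _ hs hpd
    intro x hx
    have h := hA _ (aux_inj hGpd hx)
    have e : x ⬝ᵥ ((P * G) *ᵥ ((A * G) *ᵥ x)) = (G *ᵥ x) ⬝ᵥ (P *ᵥ (A *ᵥ (G *ᵥ x))) := by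
      rw [hPG, ← Matrix.mulVec_mulVec, ← Matrix.mulVec_mulVec, Matrix.dotProduct_mulVec,
        ← Matrix.mulVec_transpose, hGsymm.eq]
    rwa [e]
  · apply aux_lyap P _ hPsymm hPpd
    intro x hx
    rw [Matrix.add_mulVec, Matrix.mulVec_add, dotProduct_add, Matrix.mulVec_mulVec x P G]
    exact add_pos (hA x hx) (hpd x hx)
end

section
/- Let A be a real n×n matrix that is diagonally stable: there exists a positive diagonal matrix P such that PA + AᵀP is positive definite. Then for every positive diagonal matrix D, both DA and A + D are positive stable (all their complex eigenvalues have positive real part). -/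
open Matrix

theorem lyap_aux {n : ℕ} (M : Matrix (Fin n) (Fin n) ℝ) (q : Fin n → ℝ) (hq : ∀ i, 0 < q i)
    (h : ∀ x : Fin n → ℝ, x ≠ 0 → 0 < ∑ i, q i * (x i * (M *ᵥ x) i)) : PosStable M := by
  intro z hz
  unfold spec at hz
  rw [← Matrix.spectrum_toLin', ← Module.End.hasEigenvalue_iff_mem_spectrum] at hz
  obtain ⟨v, hv⟩ := hz.exists_hasEigenvector
  have hv0 := hv.2
  have hv1 := hv.apply_eq_smul
  rw [Matrix.toLin'_apply] at hv1
  set x : Fin n → ℝ := fun i => (v i).re with hx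
  set y : Fin n → ℝ := fun i => (v i).im with hy
  have h1 : ∀ i, (M *ᵥ x) i = z.re * x i - z.im * y i := by
    intro i
    have := congrArg Complex.re (congrFun hv1 i)
    simpa [Matrix.mulVec, dotProduct] using this
  have h2 : ∀ i, (M *ᵥ y) i = z.re * y i + z.im * x i := by
    intro i
    have := congrArg Complex.im (congrFun hv1 i)
    simpa [Matrix.mulVec, dotProduct] using this
  have nn : ∀ w : Fin n → ℝ, 0 ≤ ∑ i, q i * (w i * (M *ᵥ w) i) := by
    intro w
    by_cases hw : w = 0
    · simp [hw]
    · exact (h w hw).le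
  have hpos : 0 < ∑ i, q i * (x i * (M *ᵥ x) i) + ∑ i, q i * (y i * (M *ᵥ y) i) := by
    by_cases hx0 : x = 0
    · have hy0 : y ≠ 0 := by
        intro hy0
        apply hv0
        funext i
        exact Complex.ext (congrFun hx0 i) (congrFun hy0 i)
      exact add_pos_of_nonneg_of_pos (nn x) (h y hy0)
    · exact add_pos_of_pos_of_nonneg (h x hx0) (nn y)
  have heq : ∑ i, q i * (x i * (M *ᵥ x) i) + ∑ i, q i * (y i * (M *ᵥ y) i)
      = z.re * ∑ i, q i * (x i ^ 2 + y i ^ 2) := by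
    rw [← Finset.sum_add_distrib, Finset.mul_sum]
    refine Finset.sum_congr rfl fun i _ => ?_
    rw [h1, h2]; ring
  rw [heq] at hpos
  refine pos_of_mul_pos_left hpos (Finset.sum_nonneg fun i _ => ?_)
  have := (hq i).le
  positivity

theorem stmt15 {n : ℕ} (A : Matrix (Fin n) (Fin n) ℝ)
    (hds : ∃ p : Fin n → ℝ, (∀ i, 0 < p i) ∧
      PosDefQ ((Matrix.diagonal p) * A + Aᵀ * (Matrix.diagonal p))) :
    ∀ d : Fin n → ℝ, (∀ i, 0 < d i) →
      PosStable ((Matrix.diagonal d) * A) ∧ PosStable (A + Matrix.diagonal d) := by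
  obtain ⟨p, hp, hP⟩ := hds
  have key : ∀ x : Fin n → ℝ, x ≠ 0 → 0 < ∑ i, p i * (x i * (A *ᵥ x) i) := by
    intro x hx
    have h := hP x hx
    have e1 : x ⬝ᵥ ((Matrix.diagonal p * A) *ᵥ x) = ∑ i, p i * (x i * (A *ᵥ x) i) := by
      rw [← Matrix.mulVec_mulVec]
      simp only [dotProduct, Matrix.mulVec_diagonal]
      exact Finset.sum_congr rfl fun i _ => by ring
    have e2 : x ⬝ᵥ ((Aᵀ * Matrix.diagonal p) *ᵥ x) = ∑ i, p i * (x i * (A *ᵥ x) i) := by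
      rw [← Matrix.mulVec_mulVec, Matrix.dotProduct_mulVec, Matrix.vecMul_transpose]
      simp only [dotProduct, Matrix.mulVec_diagonal]
      exact Finset.sum_congr rfl fun i _ => by ring
    rw [Matrix.add_mulVec, dotProduct_add, e1, e2] at h
    linarith
  intro d hd
  constructor
  · refine lyap_aux _ (fun i => p i / d i) (fun i => div_pos (hp i) (hd i)) fun x hx => ?_
    refine (key x hx).trans_eq (Finset.sum_congr rfl fun i _ => ?_)
    have := (hd i).ne'
    rw [← Matrix.mulVec_mulVec, Matrix.mulVec_diagonal]
    field_simp
  · refine lyap_aux _ p hp fun x hx => ?_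
    refine (key x hx).trans_le (Finset.sum_le_sum fun i _ => ?_)
    rw [Matrix.add_mulVec, Pi.add_apply, Matrix.mulVec_diagonal]
    have : 0 ≤ p i * (d i * x i ^ 2) := by
      have := (hp i).le
      have := (hd i).le
      positivity
    nlinarith
end

section
/- Let A be a real n×n matrix such that A + Aᵀ is positive definite. Then for every symmetric positive definite real n×n matrix H, both HA and A + H are positive stable (all their complex eigenvalues have positive real part); in particular A is multiplicative H-stable. -/
open Matrix

lemma aux_eig {n : ℕ} (M : Matrix (Fin n) (Fin n) ℝ) (z : ℂ) (hz : z ∈ spec M) :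
    ∃ x y : Fin n → ℝ, (x ≠ 0 ∨ y ≠ 0) ∧ M *ᵥ x = z.re • x - z.im • y ∧
      M *ᵥ y = z.im • x + z.re • y := by
  unfold spec at hz
  rw [spectrum.mem_iff, Matrix.isUnit_iff_isUnit_det, isUnit_iff_ne_zero, not_not,
    ← Matrix.exists_mulVec_eq_zero_iff] at hz
  obtain ⟨v, hv, h⟩ := hz
  rw [Matrix.sub_mulVec, sub_eq_zero, Algebra.algebraMap_eq_smul_one, Matrix.smul_mulVec,
    Matrix.one_mulVec] at h
  refine ⟨fun i => (v i).re, fun i => (v i).im, ?_, ?_, ?_⟩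
  · by_contra! hc
    apply hv
    funext i
    exact Complex.ext (congrFun hc.1 i) (congrFun hc.2 i)
  · funext i
    have := congrArg Complex.re (congrFun h i)
    simp [Matrix.mulVec, dotProduct] at this ⊢
    linarith
  · funext i
    have := congrArg Complex.im (congrFun h i)
    simp [Matrix.mulVec, dotProduct] at this ⊢
    linarith

lemma aux_half {n : ℕ} (A : Matrix (Fin n) (Fin n) ℝ) (hA : PosDefQ (A + Aᵀ)) : PosDefQ A := by
  intro x hx
  have h := hA x hx
  have e : x ⬝ᵥ (Aᵀ *ᵥ x) = x ⬝ᵥ (A *ᵥ x) := by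
    rw [Matrix.mulVec_transpose, dotProduct_comm, Matrix.dotProduct_mulVec]
  rw [Matrix.add_mulVec, dotProduct_add, e] at h
  linarith

lemma aux_two {n : ℕ} (A : Matrix (Fin n) (Fin n) ℝ) (hA : PosDefQ A) (x y : Fin n → ℝ)
    (h : x ≠ 0 ∨ y ≠ 0) : 0 < x ⬝ᵥ (A *ᵥ x) + y ⬝ᵥ (A *ᵥ y) := by
  have nn : ∀ x : Fin n → ℝ, 0 ≤ x ⬝ᵥ (A *ᵥ x) := by
    intro x
    by_cases hx : x = 0
    · simp [hx]
    · exact (hA x hx).le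
  rcases h with h | h
  · linarith [hA x h, nn y]
  · linarith [hA y h, nn x]

theorem stmt16 {n : ℕ} (A : Matrix (Fin n) (Fin n) ℝ)
    (hA : PosDefQ (A + Aᵀ)) :
    ∀ H : Matrix (Fin n) (Fin n) ℝ, H.IsSymm → PosDefQ H →
      PosStable (H * A) ∧ PosStable (A + H) := by
  intro H hs hH
  have hA' := aux_half A hA
  constructor
  · intro z hz
    obtain ⟨x, y, hne, h1, h2⟩ := aux_eig _ z hz
    rw [← Matrix.mulVec_mulVec] at h1 h2
    have hc := aux_two A hA' x y hne
    have hne' : A *ᵥ x ≠ 0 ∨ A *ᵥ y ≠ 0 := by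
      by_contra! h
      simp [h.1, h.2] at hc
    have hh := aux_two H hH _ _ hne'
    have hsym : (A *ᵥ x) ⬝ᵥ (H *ᵥ (A *ᵥ y)) = (A *ᵥ y) ⬝ᵥ (H *ᵥ (A *ᵥ x)) := by
      rw [Matrix.dotProduct_mulVec, ← Matrix.mulVec_transpose, hs.eq, dotProduct_comm]
    rw [h1, h2] at hh hsym
    generalize A *ᵥ x = u at *
    generalize A *ᵥ y = w at *
    simp only [dotProduct_add, dotProduct_sub, dotProduct_smul, smul_eq_mul] at hh hsym
    rw [dotProduct_comm x u, dotProduct_comm y w] at hc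
    generalize hcc : u ⬝ᵥ x + w ⬝ᵥ y = c at *
    generalize hdd : w ⬝ᵥ x - u ⬝ᵥ y = d at *
    have e1 : 0 < z.re * c + z.im * d := by
      rw [← hcc, ← hdd]; linarith
    have e2 : z.im * c = z.re * d := by
      rw [← hcc, ← hdd]; linarith
    have e3 : 0 < z.re * (c ^ 2 + d ^ 2) := by
      have := mul_pos e1 hc
      have e : (z.re * c + z.im * d) * c = z.re * (c ^ 2 + d ^ 2) := by
        linear_combination d * e2
      rwa [e] at this
    exact pos_of_mul_pos_left e3 (by positivity)
  · intro z hz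
    obtain ⟨x, y, hne, h1, h2⟩ := aux_eig _ z hz
    have hP : PosDefQ (A + H) := by
      intro x hx
      rw [Matrix.add_mulVec, dotProduct_add]
      exact add_pos (hA' x hx) (hH x hx)
    have hc := aux_two _ hP x y hne
    rw [h1, h2] at hc
    simp only [dotProduct_add, dotProduct_sub, dotProduct_smul, smul_eq_mul] at hc
    rw [dotProduct_comm y x] at hc
    have e3 : 0 < z.re * (x ⬝ᵥ x + y ⬝ᵥ y) := by linarith
    refine pos_of_mul_pos_left e3 (add_nonneg ?_ ?_) <;>
      exact Finset.sum_nonneg fun i _ => mul_self_nonneg _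
end

section
/- Let A, P, G be real n×n matrices, where P and G are invertible symmetric matrices that commute (PG = GP). If PA + AᵀP is positive definite, then every λ ∈ σ(AG) has Re λ ≠ 0, i.e., AG has no purely imaginary eigenvalues. -/
open Matrix

theorem quad_aux_s17 {n : ℕ} (A P : Matrix (Fin n) (Fin n) ℝ) (hP : P.IsSymm) (u : Fin n → ℝ) :
    u ⬝ᵥ ((P * A + Aᵀ * P) *ᵥ u) = 2 * (u ⬝ᵥ (P *ᵥ (A *ᵥ u))) := by
  have h : u ⬝ᵥ ((Aᵀ * P) *ᵥ u) = u ⬝ᵥ ((P * A) *ᵥ u) := by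
    have : (Aᵀ * P) = (P * A)ᵀ := by rw [Matrix.transpose_mul, hP.eq]
    rw [this, Matrix.mulVec_transpose, dotProduct_comm, ← Matrix.dotProduct_mulVec]
  rw [Matrix.add_mulVec, dotProduct_add, h, ← Matrix.mulVec_mulVec]
  ring

theorem nonneg_aux {n : ℕ} (W : Matrix (Fin n) (Fin n) ℝ) (h : PosDefQ W) (x : Fin n → ℝ) :
    0 ≤ x ⬝ᵥ (W *ᵥ x) := by
  by_cases hx : x = 0
  · simp [hx]
  · exact (h x hx).le

theorem stmt17 {n : ℕ} (A P G : Matrix (Fin n) (Fin n) ℝ)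
    (hPunit : IsUnit P) (hGunit : IsUnit G)
    (hPsymm : P.IsSymm) (hGsymm : G.IsSymm)
    (hPG : P * G = G * P)
    (hLyap : PosDefQ (P * A + Aᵀ * P)) :
    ∀ z ∈ spec (A * G), z.re ≠ 0 := by
  intro z hz hre
  have hdet : (algebraMap ℂ (Matrix (Fin n) (Fin n) ℂ) z
      - (A * G).map (Complex.ofReal ·)).det = 0 := by
    by_contra hne
    exact hz ((Matrix.isUnit_iff_isUnit_det _).2 (isUnit_iff_ne_zero.2 hne))
  obtain ⟨v, hv0, hv⟩ := Matrix.exists_mulVec_eq_zero_iff.2 hdet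
  rw [Matrix.sub_mulVec, sub_eq_zero, Algebra.algebraMap_eq_smul_one, Matrix.smul_mulVec,
    Matrix.one_mulVec] at hv
  set x : Fin n → ℝ := fun i => (v i).re with hx
  set y : Fin n → ℝ := fun i => (v i).im with hy
  have h1 : (A * G) *ᵥ x = (-z.im) • y := by
    ext i
    have := congrArg Complex.re (congrFun hv i)
    simp only [Matrix.mulVec, dotProduct, Pi.smul_apply, smul_eq_mul, Complex.re_sum,
      Complex.mul_re, Matrix.map_apply, Complex.ofReal_re, Complex.ofReal_im, hre] at this ⊢
    simp only [hx, hy]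
    simp at this
    linarith
  have h2 : (A * G) *ᵥ y = z.im • x := by
    ext i
    have := congrArg Complex.im (congrFun hv i)
    simp only [Matrix.mulVec, dotProduct, Pi.smul_apply, smul_eq_mul, Complex.im_sum,
      Complex.mul_im, Matrix.map_apply, Complex.ofReal_re, Complex.ofReal_im, hre] at this ⊢
    simp only [hx, hy]
    simp at this
    linarith
  rw [← Matrix.mulVec_mulVec] at h1 h2
  have key : ∀ a b : Fin n → ℝ, (G *ᵥ a) ⬝ᵥ (P *ᵥ b) = (G *ᵥ b) ⬝ᵥ (P *ᵥ a) := by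
    intro a b
    rw [dotProduct_comm (G *ᵥ b), Matrix.dotProduct_mulVec, Matrix.dotProduct_mulVec,
      ← Matrix.mulVec_transpose P, ← Matrix.mulVec_transpose G, hPsymm.eq, hGsymm.eq,
      Matrix.mulVec_mulVec, Matrix.mulVec_mulVec, hPG]
  have q1 := quad_aux_s17 A P hPsymm (G *ᵥ x)
  have q2 := quad_aux_s17 A P hPsymm (G *ᵥ y)
  rw [h1, Matrix.mulVec_smul, dotProduct_smul, smul_eq_mul, key] at q1
  rw [h2, Matrix.mulVec_smul, dotProduct_smul, smul_eq_mul] at q2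
  have n1 := nonneg_aux _ hLyap (G *ᵥ x)
  have n2 := nonneg_aux _ hLyap (G *ᵥ y)
  have inj : Function.Injective G.mulVec := Matrix.mulVec_injective_iff_isUnit.2 hGunit
  have z1 : G *ᵥ x = 0 := by
    by_contra h
    have := hLyap _ h
    linarith
  have z2 : G *ᵥ y = 0 := by
    by_contra h
    have := hLyap _ h
    linarith
  have x0 : x = 0 := inj (by simpa using z1)
  have y0 : y = 0 := inj (by simpa using z2)
  apply hv0
  ext i
  exact Complex.ext (congrFun x0 i) (congrFun y0 i)
end

section
/- Let A be a real n×n matrix and let D₀ be an invertible real diagonal matrix such that D₀A + AᵀD₀ is positive definite. Then for every real diagonal matrix D having the same sign pattern as D₀ (that is, d_ii·(D₀)_ii > 0 for all i), every λ ∈ σ(A + D) has Re λ ≠ 0, i.e., A + D has no purely imaginary eigenvalues. -/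
open Matrix

theorem aux_key {n : ℕ} (A : Matrix (Fin n) (Fin n) ℝ) (d₀ : Fin n → ℝ)
    (hLyap : PosDefQ ((Matrix.diagonal d₀) * A + Aᵀ * (Matrix.diagonal d₀)))
    (d : Fin n → ℝ) (hd : ∀ i, 0 < d i * d₀ i) (x : Fin n → ℝ) (hx : x ≠ 0) :
    0 < ∑ i, d₀ i * x i * ((A + Matrix.diagonal d) *ᵥ x) i := by
  have h := hLyap x hx
  have e1 : x ⬝ᵥ ((Matrix.diagonal d₀ * A) *ᵥ x) = ∑ i, d₀ i * x i * (A *ᵥ x) i := by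
    rw [← Matrix.mulVec_mulVec]
    simp only [dotProduct, Matrix.mulVec_diagonal]
    exact Finset.sum_congr rfl fun i _ => by ring
  have e2 : x ⬝ᵥ ((Aᵀ * Matrix.diagonal d₀) *ᵥ x) = ∑ i, d₀ i * x i * (A *ᵥ x) i := by
    rw [← Matrix.mulVec_mulVec, Matrix.dotProduct_mulVec, Matrix.vecMul_transpose]
    simp only [dotProduct, Matrix.mulVec_diagonal]
    exact Finset.sum_congr rfl fun i _ => by ring
  rw [Matrix.add_mulVec, dotProduct_add, e1, e2] at h
  have h2 : 0 ≤ ∑ i, (d i * d₀ i) * (x i * x i) :=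
    Finset.sum_nonneg fun i _ => mul_nonneg (hd i).le (mul_self_nonneg _)
  have e3 : ∑ i, d₀ i * x i * ((A + Matrix.diagonal d) *ᵥ x) i
      = ∑ i, d₀ i * x i * (A *ᵥ x) i + ∑ i, (d i * d₀ i) * (x i * x i) := by
    rw [← Finset.sum_add_distrib]
    refine Finset.sum_congr rfl fun i _ => ?_
    rw [Matrix.add_mulVec, Pi.add_apply, Matrix.mulVec_diagonal]
    ring
  rw [e3]
  linarith

theorem stmt18 {n : ℕ} (A : Matrix (Fin n) (Fin n) ℝ)
    (d₀ : Fin n → ℝ) (hd₀ : ∀ i, d₀ i ≠ 0)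
    (hLyap : PosDefQ ((Matrix.diagonal d₀) * A + Aᵀ * (Matrix.diagonal d₀))) :
    ∀ d : Fin n → ℝ, (∀ i, 0 < d i * d₀ i) →
      ∀ z ∈ spec (A + Matrix.diagonal d), z.re ≠ 0 := by
  intro d hd z hz hre
  unfold spec at hz
  set M := A + Matrix.diagonal d with hM
  rw [← Matrix.spectrum_toLin', ← Module.End.hasEigenvalue_iff_mem_spectrum] at hz
  obtain ⟨v, hv⟩ := hz.exists_hasEigenvector
  have hv0 := hv.2
  have hev := hv.apply_eq_smul
  rw [Matrix.toLin'_apply] at hev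
  have hR : ∀ i, (M *ᵥ fun j => (v j).re) i = -(z.im * (v i).im) := by
    intro i
    have := congrArg Complex.re (congrFun hev i)
    simpa [Matrix.mulVec, dotProduct, hre] using this
  have hI : ∀ i, (M *ᵥ fun j => (v j).im) i = z.im * (v i).re := by
    intro i
    have := congrArg Complex.im (congrFun hev i)
    simpa [Matrix.mulVec, dotProduct, hre] using this
  have hsum : ∑ i, d₀ i * (v i).re * (M *ᵥ fun j => (v j).re) i
      + ∑ i, d₀ i * (v i).im * (M *ᵥ fun j => (v j).im) i = 0 := by
    rw [← Finset.sum_add_distrib]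
    refine Finset.sum_eq_zero fun i _ => ?_
    rw [hR, hI]
    ring
  have kx := aux_key A d₀ hLyap d hd (fun j => (v j).re)
  have ky := aux_key A d₀ hLyap d hd (fun j => (v j).im)
  rw [← hM] at kx ky
  by_cases hx : (fun j => (v j).re) = 0
  · by_cases hy : (fun j => (v j).im) = 0
    · exact hv0 (funext fun i => Complex.ext (congrFun hx i) (congrFun hy i))
    · have := ky hy
      have e : ∑ i, d₀ i * (v i).re * (M *ᵥ fun j => (v j).re) i = 0 :=
        Finset.sum_eq_zero fun i _ => by
          have : (v i).re = 0 := congrFun hx i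
          simp [this]
      linarith
  · have h1 := kx hx
    by_cases hy : (fun j => (v j).im) = 0
    · have e : ∑ i, d₀ i * (v i).im * (M *ᵥ fun j => (v j).im) i = 0 :=
        Finset.sum_eq_zero fun i _ => by
          have : (v i).im = 0 := congrFun hy i
          simp [this]
      linarith
    · have := ky hy
      linarith
end

section
/- Let A be a positive stable real n×n matrix (every λ ∈ σ(A) has Re λ > 0). Then there exists a symmetric positive definite real n×n matrix P with PA + AᵀP positive definite such that for every symmetric positive definite real n×n matrix G commuting with P (GP = PG), both AG and A + G are positive stable. -/
open Matrix

lemma aux_spec {n : ℕ} (M : Matrix (Fin n) (Fin n) ℂ) (z : ℂ) :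
    z ∈ spectrum ℂ M ↔ ∃ v : Fin n → ℂ, v ≠ 0 ∧ M *ᵥ v = z • v := by
  rw [spectrum.mem_iff, Matrix.isUnit_iff_isUnit_det, isUnit_iff_ne_zero, not_not,
    ← Matrix.exists_mulVec_eq_zero_iff]
  refine exists_congr fun v => and_congr_right fun _ => ?_
  rw [Matrix.sub_mulVec, sub_eq_zero, Matrix.algebraMap_eq_diagonal]
  have : (diagonal (algebraMap ℂ (Fin n → ℂ) z)) *ᵥ v = z • v := by
    ext i; simp [mulVec_diagonal]
  rw [this, eq_comm]

lemma aux_prod {n : ℕ} (P G : Matrix (Fin n) (Fin n) ℝ) (hP : P.IsSymm) (hG : G.IsSymm)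
    (hP' : PosDefQ P) (hG' : PosDefQ G) (h : G * P = P * G) : PosDefQ (G * P) := by
  have toPD : ∀ W : Matrix (Fin n) (Fin n) ℝ, W.IsSymm → PosDefQ W → W.PosDef := by
    intro W h1 h2
    refine Matrix.PosDef.of_dotProduct_mulVec_pos ?_ ?_
    · rw [Matrix.IsHermitian, conjTranspose_eq_transpose_of_trivial]; exact h1
    · intro x hx; simpa using h2 x hx
  have hPp := toPD P hP hP'
  have hGp := toPD G hG hG'
  have hc : Commute G P := h
  have : (G * P).PosDef := by
    open scoped MatrixOrder Matrix.Norms.L2Operator in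
    have h0 : 0 ≤ G * P := hc.mul_nonneg hGp.posSemidef.nonneg hPp.posSemidef.nonneg
    exact (Matrix.nonneg_iff_posSemidef.1 h0).posDef_iff_isUnit.2 (hGp.isUnit.mul hPp.isUnit)
  intro x hx
  simpa using this.dotProduct_mulVec_pos hx

lemma aux_re {n : ℕ} (M : Matrix (Fin n) (Fin n) ℝ) (v : Fin n → ℂ) (i : Fin n) :
    ((M.map (Complex.ofReal ·)) *ᵥ v) i =
      ((M *ᵥ (fun i => (v i).re)) i : ℂ) + ((M *ᵥ (fun i => (v i).im)) i : ℂ) * Complex.I := by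
  simp only [mulVec, dotProduct, Matrix.map_apply]
  push_cast
  rw [Finset.sum_mul, ← Finset.sum_add_distrib]
  refine Finset.sum_congr rfl fun j _ => ?_
  conv_lhs => rw [← Complex.re_add_im (v j)]
  ring

lemma aux_sym {n : ℕ} (M P : Matrix (Fin n) (Fin n) ℝ) (hP : P.IsSymm) (x : Fin n → ℝ) :
    x ⬝ᵥ ((P * M + Mᵀ * P) *ᵥ x) = 2 * (x ⬝ᵥ (P *ᵥ (M *ᵥ x))) := by
  rw [add_mulVec, dotProduct_add, ← mulVec_mulVec, ← mulVec_mulVec, two_mul]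
  congr 1
  rw [dotProduct_mulVec x Mᵀ, vecMul_transpose, dotProduct_mulVec (M *ᵥ x), dotProduct_comm,
    ← mulVec_transpose, hP.eq]

lemma aux_stable {n : ℕ} (M P : Matrix (Fin n) (Fin n) ℝ) (hP : P.IsSymm)
    (hP' : PosDefQ P) (h : PosDefQ (P * M + Mᵀ * P)) : PosStable M := by
  intro z hz
  obtain ⟨v, hv, hMv⟩ := (aux_spec _ _).1 hz
  set x : Fin n → ℝ := fun i => (v i).re with hx
  set y : Fin n → ℝ := fun i => (v i).im with hy
  have e1 : M *ᵥ x = z.re • x - z.im • y := by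
    ext i
    have := congrArg Complex.re ((aux_re M v i).symm.trans (congrFun hMv i))
    simpa [hx, hy] using this
  have e2 : M *ᵥ y = z.re • y + z.im • x := by
    ext i
    have := congrArg Complex.im ((aux_re M v i).symm.trans (congrFun hMv i))
    simpa [hx, hy] using this
  have nn : ∀ W : Matrix (Fin n) (Fin n) ℝ, PosDefQ W → 0 < x ⬝ᵥ (W *ᵥ x) + y ⬝ᵥ (W *ᵥ y) := by
    intro W hW
    have n1 : ∀ u, 0 ≤ u ⬝ᵥ (W *ᵥ u) := by
      intro u
      by_cases hu : u = 0
      · simp [hu]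
      · exact (hW u hu).le
    by_cases hx0 : x = 0
    · have hy0 : y ≠ 0 := by
        intro hy0
        apply hv
        ext i
        exact Complex.ext (congrFun hx0 i) (congrFun hy0 i)
      linarith [n1 x, hW y hy0]
    · linarith [n1 y, hW x hx0]
  have k1 := nn _ hP'
  have k2 := nn _ h
  rw [aux_sym M P hP, aux_sym M P hP, e1, e2] at k2
  have k3 : x ⬝ᵥ (P *ᵥ y) = y ⬝ᵥ (P *ᵥ x) := by
    rw [dotProduct_mulVec, dotProduct_comm, ← mulVec_transpose, hP.eq]
  simp only [mulVec_sub, mulVec_add, mulVec_smul, dotProduct_sub, dotProduct_add,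
    dotProduct_smul, smul_eq_mul, k3] at k2
  have k4 : 0 < z.re * (x ⬝ᵥ (P *ᵥ x) + y ⬝ᵥ (P *ᵥ y)) := by nlinarith
  exact (pos_iff_pos_of_mul_pos k4).2 k1

open scoped Matrix.Norms.L2Operator in
lemma aux_gelfand {n : ℕ} (C : Matrix (Fin n) (Fin n) ℂ) (h : ∀ z ∈ spectrum ℂ C, ‖z‖ < 1) :
    ∃ k : ℕ, 0 < k ∧ ‖C ^ k‖ < 1 := by
  rcases Nat.eq_zero_or_pos n with rfl | hn
  · refine ⟨1, one_pos, ?_⟩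
    rw [Subsingleton.elim (C ^ 1) 0]; simp
  have : Nonempty (Fin n) := ⟨⟨0, hn⟩⟩
  have : CompleteSpace (Matrix (Fin n) (Fin n) ℂ) := FiniteDimensional.complete ℂ _
  have hr : spectralRadius ℂ C < (1 : NNReal) :=
    spectrum.spectralRadius_lt_of_forall_lt C (fun z hz => by exact_mod_cast h z hz)
  have ht := spectrum.pow_nnnorm_pow_one_div_tendsto_nhds_spectralRadius C
  obtain ⟨k, hk, hk0⟩ := ((ht.eventually_lt_const hr).and (Filter.eventually_gt_atTop 0)).exists
  refine ⟨k, hk0, ?_⟩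
  have hkp : (0 : ℝ) < 1 / k := by positivity
  by_contra hcon
  push Not at hcon
  have : (1 : ENNReal) ≤ (‖C ^ k‖₊ : ENNReal) ^ (1 / k : ℝ) := by
    apply ENNReal.one_le_rpow _ hkp
    exact_mod_cast hcon
  exact absurd hk (not_lt.2 (by simpa using this))

open scoped Matrix.Norms.L2Operator in
lemma aux_contr {n : ℕ} (B : Matrix (Fin n) (Fin n) ℝ)
    (h : ‖B.map (Complex.ofReal ·)‖ < 1) (x : Fin n → ℝ) (hx : x ≠ 0) :
    (B *ᵥ x) ⬝ᵥ (B *ᵥ x) < x ⬝ᵥ x := by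
  have h1 := Matrix.l2_opNorm_mulVec (B.map (Complex.ofReal ·))
    (WithLp.toLp 2 (fun i => (x i : ℂ)))
  have key : ∀ u : Fin n → ℝ, ‖(WithLp.toLp 2 (fun i => (u i : ℂ)) : EuclideanSpace ℂ (Fin n))‖ ^ 2
      = u ⬝ᵥ u := by
    intro u
    rw [EuclideanSpace.norm_sq_eq]
    simp [dotProduct, sq]
  have e : (EuclideanSpace.equiv (Fin n) ℂ).symm ((B.map (Complex.ofReal ·)) *ᵥ
      (fun i => (x i : ℂ))) = WithLp.toLp 2 (fun i => ((B *ᵥ x) i : ℂ)) := by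
    ext i
    have := aux_re B (fun i => (x i : ℂ)) i
    simpa [mulVec, dotProduct] using this
  have h2 : ‖(WithLp.toLp 2 (fun i => ((B *ᵥ x) i : ℂ)) : EuclideanSpace ℂ (Fin n))‖ ≤ _ :=
    e ▸ h1
  rw [← key, ← key]
  have hpos : 0 < ‖(WithLp.toLp 2 (fun i => (x i : ℂ)) : EuclideanSpace ℂ (Fin n))‖ := by
    rw [norm_pos_iff]
    intro h0
    apply hx
    ext i
    have := congrArg (fun w : EuclideanSpace ℂ (Fin n) => w i) h0
    simpa using this
  have h3 := lt_of_le_of_lt h2 (mul_lt_of_lt_one_left hpos h)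
  exact pow_lt_pow_left₀ h3 (norm_nonneg _) two_ne_zero

lemma aux_lyap_s19 {n : ℕ} (A : Matrix (Fin n) (Fin n) ℝ) (hA : PosStable A) :
    ∃ P : Matrix (Fin n) (Fin n) ℝ, P.IsSymm ∧ PosDefQ P ∧ PosDefQ (P * A + Aᵀ * P) := by
  set c : Matrix (Fin n) (Fin n) ℝ →+* Matrix (Fin n) (Fin n) ℂ :=
    Complex.ofRealHom.mapMatrix with hc
  have hcm : ∀ M, c M = M.map (Complex.ofReal ·) := fun M => rfl
  have hA' : ∀ (z : ℂ) (v : Fin n → ℂ), v ≠ 0 → c A *ᵥ v = z • v → 0 < z.re :=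
    fun z v hv h => hA z ((aux_spec _ _).2 ⟨v, hv, h⟩)
  have hdet : IsUnit (1 + A) := by
    rw [Matrix.isUnit_iff_isUnit_det, isUnit_iff_ne_zero]
    intro h0
    obtain ⟨v, hv, h⟩ := Matrix.exists_mulVec_eq_zero_iff.2 h0
    have := hA' (-1) (fun i => (v i : ℂ)) (by
      intro h; apply hv; ext i; simpa using congrFun h i) (by
      ext i
      rw [hcm, aux_re]
      have := congrFun h i
      rw [add_mulVec, one_mulVec] at this
      have h2 : (A *ᵥ v) i = - v i := by
        simp only [Pi.add_apply, Pi.zero_apply] at this; linarith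
      simp [h2, show (fun _ : Fin n => (0:ℝ)) = 0 from rfl])
    norm_num at this
  obtain ⟨U, hU⟩ := hdet
  set R : Matrix (Fin n) (Fin n) ℝ := ↑U⁻¹ with hR
  have hR1 : (1 + A) * R = 1 := by rw [← hU]; simp [hR]
  have hR2 : R * (1 + A) = 1 := by rw [← hU]; simp [hR]
  set B := (1 - A) * R with hB
  have hBA : B * (1 + A) = 1 - A := by rw [hB, mul_assoc, hR2, mul_one]
  have hspec : ∀ z ∈ spectrum ℂ (c B), ‖z‖ < 1 := by
    intro z hz
    obtain ⟨v, hv, h⟩ := (aux_spec _ _).1 hz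
    set u := c R *ᵥ v with hu
    have hvu : v = c (1 + A) *ᵥ u := by
      rw [hu, mulVec_mulVec, ← map_mul, hR1, map_one, one_mulVec]
    have hu0 : u ≠ 0 := by
      intro h0; apply hv; rw [hvu, h0, mulVec_zero]
    rw [hvu, mulVec_mulVec, ← map_mul, hBA, map_sub, map_add, map_one, sub_mulVec, add_mulVec,
      one_mulVec] at h
    have h1 : (1 - z) • u = (1 + z) • (c A *ᵥ u) := by
      rw [sub_smul, add_smul, one_smul, one_smul]
      rw [smul_add] at h
      rw [sub_eq_iff_eq_add] at h ⊢
      exact h.trans (by abel)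
    have hz1 : 1 + z ≠ 0 := by
      intro h0
      have hz' : z = -1 := by linear_combination h0
      rw [h0, zero_smul, hz', smul_eq_zero] at h1
      rcases h1 with h1 | h1
      · norm_num at h1
      · exact hu0 h1
    have h2 : c A *ᵥ u = ((1 - z) / (1 + z)) • u := by
      rw [div_eq_inv_mul, mul_smul, h1, smul_smul, inv_mul_cancel₀ hz1, one_smul]
    have h3 := hA' _ u hu0 h2
    have hN : 0 < Complex.normSq (1 + z) := Complex.normSq_pos.2 hz1
    rw [Complex.div_re, ← add_div, div_pos_iff_of_pos_right hN] at h3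
    simp at h3
    have h4 : Complex.normSq z < 1 := by
      rw [Complex.normSq_apply]; nlinarith
    rw [Complex.normSq_eq_norm_sq] at h4
    nlinarith [norm_nonneg z]
  obtain ⟨k, hk, hkn⟩ := aux_gelfand (c B) hspec
  rw [← map_pow] at hkn
  have hcontr := aux_contr (B ^ k) hkn
  set P : Matrix (Fin n) (Fin n) ℝ := ∑ j ∈ Finset.range k, (B ^ j)ᵀ * B ^ j with hP
  have hq : ∀ x : Fin n → ℝ, x ⬝ᵥ (P *ᵥ x) =
      ∑ j ∈ Finset.range k, (B ^ j *ᵥ x) ⬝ᵥ (B ^ j *ᵥ x) := by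
    intro x
    rw [hP, sum_mulVec, dotProduct_sum]
    refine Finset.sum_congr rfl fun j _ => ?_
    rw [← mulVec_mulVec, dotProduct_mulVec, vecMul_transpose]
  have hPs : P.IsSymm := by
    rw [Matrix.IsSymm, hP, transpose_sum]
    simp
  refine ⟨P, hPs, ?_, ?_⟩
  · intro x hx
    rw [hq]
    refine Finset.sum_pos' (fun j _ => ?_) ⟨0, Finset.mem_range.2 hk, ?_⟩
    · exact Finset.sum_nonneg fun i _ => mul_self_nonneg _
    · simp only [pow_zero, one_mulVec]
      have h0 : 0 ≤ x ⬝ᵥ x := Finset.sum_nonneg fun i _ => mul_self_nonneg _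
      exact lt_of_le_of_ne h0 (fun h => hx (dotProduct_self_eq_zero.1 h.symm))
  · intro y hy
    rw [aux_sym A P hPs]
    set x := (1 + A) *ᵥ y with hx
    have hx0 : x ≠ 0 := by
      intro h0; apply hy
      have : R *ᵥ x = y := by rw [hx, mulVec_mulVec, hR2, one_mulVec]
      rw [← this, h0, mulVec_zero]
    have hBx : B *ᵥ x = y - A *ᵥ y := by
      rw [hx, mulVec_mulVec, hBA, sub_mulVec, one_mulVec]
    have hxe : x = y + A *ᵥ y := by rw [hx, add_mulVec, one_mulVec]
    have d : x ⬝ᵥ (P *ᵥ x) - (B *ᵥ x) ⬝ᵥ (P *ᵥ (B *ᵥ x)) =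
        x ⬝ᵥ x - (B ^ k *ᵥ x) ⬝ᵥ (B ^ k *ᵥ x) := by
      rw [hq, hq]
      simp only [mulVec_mulVec, ← pow_succ]
      rw [← Finset.sum_sub_distrib, Finset.sum_range_sub']
      simp
    have d2 := hcontr x hx0
    have k3 : (A *ᵥ y) ⬝ᵥ (P *ᵥ y) = y ⬝ᵥ (P *ᵥ (A *ᵥ y)) := by
      rw [dotProduct_mulVec, dotProduct_comm, ← mulVec_transpose, hPs.eq]
    have d3 : x ⬝ᵥ (P *ᵥ x) - (B *ᵥ x) ⬝ᵥ (P *ᵥ (B *ᵥ x)) =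
        4 * (y ⬝ᵥ (P *ᵥ (A *ᵥ y))) := by
      rw [hBx, hxe]
      simp only [mulVec_sub, mulVec_add, dotProduct_sub, dotProduct_add, sub_dotProduct,
        add_dotProduct, k3]
      ring
    linarith

theorem stmt19 {n : ℕ} (A : Matrix (Fin n) (Fin n) ℝ) (hA : PosStable A) :
    ∃ P : Matrix (Fin n) (Fin n) ℝ, P.IsSymm ∧ PosDefQ P ∧
      PosDefQ (P * A + Aᵀ * P) ∧
      ∀ G : Matrix (Fin n) (Fin n) ℝ, G.IsSymm → PosDefQ G → G * P = P * G →
        PosStable (A * G) ∧ PosStable (A + G) := by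
  obtain ⟨P, hP, hP', hL⟩ := aux_lyap_s19 A hA
  refine ⟨P, hP, hP', hL, fun G hG hG' h => ?_⟩
  have hGP := aux_prod P G hP hG hP' hG' h
  constructor
  · refine aux_stable (A * G) (G * P) ?_ hGP ?_
    · rw [Matrix.IsSymm, transpose_mul, hP.eq, hG.eq, h]
    · have e : G * P * (A * G) + (A * G)ᵀ * (G * P) = G * (P * A + Aᵀ * P) * G := by
        have h2 : G * Aᵀ * (G * P) = G * Aᵀ * (P * G) := by rw [h]
        rw [transpose_mul, hG.eq, h2]; noncomm_ring
      rw [e]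
      intro x hx
      have hGx : G *ᵥ x ≠ 0 := by
        intro h0
        have := hG' x hx
        rw [h0] at this; simp at this
      have := hL _ hGx
      rw [← mulVec_mulVec, ← mulVec_mulVec, dotProduct_mulVec x G, ← mulVec_transpose, hG.eq]
      exact this
  · refine aux_stable (A + G) P hP hP' ?_
    have e : P * (A + G) + (A + G)ᵀ * P = (P * A + Aᵀ * P) + (G * P + G * P) := by
      rw [transpose_add, hG.eq, mul_add, add_mul, ← h]; abel
    rw [e]
    intro x hx
    rw [add_mulVec, add_mulVec (G * P), dotProduct_add, dotProduct_add]
    linarith [hL x hx, hGP x hx]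
end
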